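/- arXiv:1502.03229 — 6 statements merged into one kernel-verified Lean document; each statement's English description precedes it below -/
import Mathlib

section
/- Let d ≥ 1, n ≥ 0, and let a₀, …, a_n be nonnegative real constants. Let G be the Sobolev metric of order n with constant coefficients, G_c(h,k) = Σ_{j=0}^{n} a_j ∫₀^{2π} ⟨(D_s)^j h(θ), (D_s)^j k(θ)⟩ |c'(θ)| dθ. Then G is reparametrization invariant: for every smooth 2π-periodic regular curve c, smooth 2π-periodic h, k, and reparametrization φ, G_{c∘φ}(h∘φ, k∘φ) = G_c(h,k). -/
/-!
The operator `D_s` is equivariant under reparametrization: by the chain rule both `(h ∘ φ)'` and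
`|(c ∘ φ)'|` acquire the factor `φ' > 0`, which cancels in the quotient, so
`D_{s, c ∘ φ} (h ∘ φ) = (D_{s, c} h) ∘ φ` (`arcDeriv_comp`). Regularity of `c` keeps all iterates
smooth, hence the same holds for `D_s^j`. The remaining factor `|(c ∘ φ)'| = φ' · (|c'| ∘ φ)` is
the Jacobian of the substitution `u = φ θ`, which turns each integral over `[0, 2π]` into the
integral of the original integrand over `[φ 0, φ 0 + 2π]`. As that integrand is `2π`-periodic, its
integral over any interval of length `2π` is the same.
-/

open Real MeasureTheory Set
open scoped ContDiff RealInnerProductSpace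

noncomputable section

/-- `ℝ^d` with its Euclidean structure. -/
abbrev Rd (d : ℕ) : Type := EuclideanSpace ℝ (Fin d)

/-- Arc-length derivative `D_s h = h' / |c'|` with respect to the curve `c`. -/
def arcDeriv {d : ℕ} (c : ℝ → Rd d) (h : ℝ → Rd d) : ℝ → Rd d :=
  fun θ => ‖deriv c θ‖⁻¹ • deriv h θ

/-- The Sobolev metric of order `n` with constant coefficients `a 0, …, a n`:
`G_c(h,k) = Σ_{j=0}^n a_j ∫₀^{2π} ⟨D_s^j h, D_s^j k⟩ |c'| dθ`. -/
def sobolevMetric {d : ℕ} (n : ℕ) (a : ℕ → ℝ) (c h k : ℝ → Rd d) : ℝ :=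
  ∑ j ∈ Finset.range (n + 1), a j *
    ∫ θ in (0:ℝ)..(2 * π),
      ⟪(arcDeriv c)^[j] h θ, (arcDeriv c)^[j] k θ⟫ * ‖deriv c θ‖

theorem arcDeriv_contDiff {d : ℕ} {c h : ℝ → Rd d} (hc : ContDiff ℝ ∞ c)
    (hcreg : ∀ θ, deriv c θ ≠ 0) (hh : ContDiff ℝ ∞ h) : ContDiff ℝ ∞ (arcDeriv c h) := by
  have hc' := (contDiff_infty_iff_deriv.1 hc).2
  have hh' := (contDiff_infty_iff_deriv.1 hh).2
  exact ((hc'.norm ℝ hcreg).inv fun θ => norm_ne_zero_iff.2 (hcreg θ)).smul hh'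

theorem arcDeriv_iterate_contDiff {d : ℕ} {c h : ℝ → Rd d} (hc : ContDiff ℝ ∞ c)
    (hcreg : ∀ θ, deriv c θ ≠ 0) (hh : ContDiff ℝ ∞ h) (j : ℕ) :
    ContDiff ℝ ∞ ((arcDeriv c)^[j] h) := by
  induction j with
  | zero => exact hh
  | succ j ih =>
    rw [Function.iterate_succ_apply']
    exact arcDeriv_contDiff hc hcreg ih

/-- Equivariance of the arc-length derivative: the factor `φ'` from the chain rule cancels. -/
theorem arcDeriv_comp {d : ℕ} {c h : ℝ → Rd d} {φ : ℝ → ℝ} (hc : Differentiable ℝ c)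
    (hh : Differentiable ℝ h) (hφ : Differentiable ℝ φ) (hφ' : ∀ θ, 0 < deriv φ θ) :
    arcDeriv (c ∘ φ) (h ∘ φ) = arcDeriv c h ∘ φ := by
  funext θ
  have hne := (hφ' θ).ne'
  simp only [arcDeriv, Function.comp_apply]
  rw [deriv.scomp θ (hc _) (hφ θ), deriv.scomp θ (hh _) (hφ θ), norm_smul,
    Real.norm_of_nonneg (hφ' θ).le, smul_smul, mul_inv, mul_right_comm, inv_mul_cancel₀ hne,
    one_mul]

theorem arcDeriv_iterate_comp {d : ℕ} {c h : ℝ → Rd d} {φ : ℝ → ℝ} (hc : ContDiff ℝ ∞ c)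
    (hcreg : ∀ θ, deriv c θ ≠ 0) (hh : ContDiff ℝ ∞ h) (hφ : Differentiable ℝ φ)
    (hφ' : ∀ θ, 0 < deriv φ θ) (j : ℕ) :
    (arcDeriv (c ∘ φ))^[j] (h ∘ φ) = (arcDeriv c)^[j] h ∘ φ := by
  induction j with
  | zero => rfl
  | succ j ih =>
    rw [Function.iterate_succ_apply', Function.iterate_succ_apply', ih]
    exact arcDeriv_comp (hc.differentiable (by simp))
      ((arcDeriv_iterate_contDiff hc hcreg hh j).differentiable (by simp)) hφ hφ'

theorem deriv_periodic {d : ℕ} {f : ℝ → Rd d} {T : ℝ} (hf : Function.Periodic f T) :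
    Function.Periodic (deriv f) T := fun θ => by
  rw [← deriv_comp_add_const, funext hf]

theorem arcDeriv_iterate_periodic {d : ℕ} {c h : ℝ → Rd d} {T : ℝ} (hc : Function.Periodic c T)
    (hh : Function.Periodic h T) (j : ℕ) : Function.Periodic ((arcDeriv c)^[j] h) T := by
  induction j with
  | zero => exact hh
  | succ j ih =>
    intro θ
    rw [Function.iterate_succ_apply']
    simp only [arcDeriv]
    rw [deriv_periodic hc θ, deriv_periodic ih θ]

/-- Sobolev metrics with constant coefficients are reparametrization invariant. -/
theorem sobolevMetric_reparametrization_invariant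
    (d : ℕ) (hd : 1 ≤ d) (n : ℕ) (a : ℕ → ℝ) (ha : ∀ j, 0 ≤ a j)
    (c h k : ℝ → Rd d)
    (hc : ContDiff ℝ ∞ c) (hcper : ∀ θ, c (θ + 2 * π) = c θ)
    (hcreg : ∀ θ, deriv c θ ≠ 0)
    (hh : ContDiff ℝ ∞ h) (hhper : ∀ θ, h (θ + 2 * π) = h θ)
    (hk : ContDiff ℝ ∞ k) (hkper : ∀ θ, k (θ + 2 * π) = k θ)
    (φ : ℝ → ℝ) (hφ : ContDiff ℝ ∞ φ) (hφ' : ∀ θ, 0 < deriv φ θ)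
    (hφper : ∀ θ, φ (θ + 2 * π) = φ θ + 2 * π) :
    sobolevMetric n a (c ∘ φ) (h ∘ φ) (k ∘ φ) = sobolevMetric n a c h k := by
  have hφd : Differentiable ℝ φ := hφ.differentiable (by simp)
  unfold sobolevMetric
  refine Finset.sum_congr rfl fun j _ => ?_
  congr 1
  rw [arcDeriv_iterate_comp hc hcreg hh hφd hφ' j, arcDeriv_iterate_comp hc hcreg hk hφd hφ' j]
  set g : ℝ → ℝ := fun u =>
    ⟪(arcDeriv c)^[j] h u, (arcDeriv c)^[j] k u⟫ * ‖deriv c u‖ with hg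
  have hgper : Function.Periodic g (2 * π) := fun u => by
    simp only [hg]
    rw [arcDeriv_iterate_periodic hcper hhper j u, arcDeriv_iterate_periodic hcper hkper j u,
      deriv_periodic hcper u]
  calc _ = ∫ θ in (0:ℝ)..(2 * π), (g ∘ φ) θ * deriv φ θ := by
        congr 1
        funext θ
        rw [deriv.scomp θ (hc.differentiable (by simp) _) (hφd θ), norm_smul,
          Real.norm_of_nonneg (hφ' θ).le]
        simp only [hg, Function.comp_apply]
        ring
    _ = ∫ u in φ 0..φ (2 * π), g u :=
        intervalIntegral.integral_comp_mul_deriv_of_deriv_nonneg hφd.continuous.continuousOn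
          (fun θ _ => (hφd θ).hasDerivAt) fun θ _ => (hφ' θ).le
    _ = ∫ u in φ 0..(φ 0 + 2 * π), g u := by rw [← hφper 0, zero_add]
    _ = ∫ u in (0:ℝ)..(2 * π), g u := by
        rw [hgper.intervalIntegral_add_eq (φ 0) 0, zero_add]
end
end

section
/- Fix r₀ > 0 and T > 0, and define c : [0,T) × ℝ → ℝ² by c(t,θ) = r₀ (1 − t/T)^{2/3} (cos θ, sin θ). Then c is smooth, each curve c(t,·) is 2π-periodic and regular, c satisfies the geodesic equation of the L²-metric, (|c_θ| c_t)_t = −(1/2) ((|c_t|²/|c_θ|) c_θ)_θ, at every (t,θ) ∈ [0,T) × ℝ, and c(t,θ) → (0,0) uniformly in θ as t → T⁻. In particular, a circle can be shrunk to a point along a solution of the geodesic equation in finite time. -/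
/-!
Write `c(t,θ) = r(t) e(θ)` with `e = circlePt` the unit radial field, so that `e' = n` and
`n' = -e` for the unit tangential field `n`. Then `c_θ = r n` and `c_t = r' e`, hence `|c_θ| = r`
and `|c_t|² = r'²`, and the geodesic equation reduces to the ordinary differential equation
`(r r')' = r'² / 2` for the radius. With `u = 1 - t/T` the radius `r = r₀ u^{2/3}` satisfies
`r r' = -(2/3) (r₀²/T) u^{1/3}` and `r' = -(2/3) (r₀/T) u^{-1/3}`, so both sides of the equation
equal `(2/9) (r₀²/T²) u^{-2/3}`. The curves shrink to the origin because `r` is continuous with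
`r(T) = 0`.
-/

open Real MeasureTheory Set
open scoped ContDiff RealInnerProductSpace

noncomputable section

/-- `ℝ²` with its Euclidean structure. -/
abbrev R2 : Type := EuclideanSpace ℝ (Fin 2)

/-- The point `(cos θ, sin θ)` on the unit circle, as an element of Euclidean `ℝ²`. -/
def circlePt (θ : ℝ) : R2 := (WithLp.equiv 2 (Fin 2 → ℝ)).symm ![Real.cos θ, Real.sin θ]

/-- The shrinking family of circles `c(t,θ) = r₀ (1 − t/T)^{2/3} (cos θ, sin θ)`. -/
def shrinkingCircle (r₀ T : ℝ) (t θ : ℝ) : R2 :=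
  (r₀ * (1 - t / T) ^ ((2 : ℝ) / 3)) • circlePt θ

/-- The unit tangent `(-sin θ, cos θ)` of the unit circle at `circlePt θ`. -/
def circleTangent (θ : ℝ) : R2 :=
  (WithLp.equiv 2 (Fin 2 → ℝ)).symm ![-Real.sin θ, Real.cos θ]

/-- The radius `r₀ (1 - t/T)^{2/3}` of the shrinking circle at time `t`. -/
def radius (r₀ T t : ℝ) : ℝ := r₀ * (1 - t / T) ^ ((2 : ℝ) / 3)

/-- The time derivative `-(2/3) (r₀/T) (1 - t/T)^{-1/3}` of `radius`, valid for `t < T`. -/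
def radiusVel (r₀ T t : ℝ) : ℝ := -(2 / 3) * (r₀ / T) * (1 - t / T) ^ (-(1 : ℝ) / 3)

lemma shrinkingCircle_eq (r₀ T t θ : ℝ) :
    shrinkingCircle r₀ T t θ = radius r₀ T t • circlePt θ := rfl

lemma norm_circlePt (θ : ℝ) : ‖circlePt θ‖ = 1 := by
  simp [circlePt, EuclideanSpace.norm_eq, Fin.sum_univ_two]

lemma norm_circleTangent (θ : ℝ) : ‖circleTangent θ‖ = 1 := by
  simp [circleTangent, EuclideanSpace.norm_eq, Fin.sum_univ_two]

lemma contDiff_circlePt : ContDiff ℝ ∞ circlePt := by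
  rw [contDiff_euclidean]
  intro i
  fin_cases i
  · simpa [circlePt] using Real.contDiff_cos
  · simpa [circlePt] using Real.contDiff_sin

lemma hasDerivAt_of_coord {f : ℝ → R2} {v : R2} {x : ℝ}
    (h : ∀ i, HasDerivAt (fun y => f y i) (v i) x) : HasDerivAt f v x := by
  rw [hasDerivAt_iff_hasFDerivAt, ← hasFDerivWithinAt_univ, hasFDerivWithinAt_euclidean]
  intro i
  refine ((h i).hasFDerivAt.hasFDerivWithinAt).congr_fderiv ?_
  ext
  simp

lemma hasDerivAt_circlePt (θ : ℝ) : HasDerivAt circlePt (circleTangent θ) θ := by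
  refine hasDerivAt_of_coord fun i => ?_
  fin_cases i
  · simpa [circlePt, circleTangent] using Real.hasDerivAt_cos θ
  · simpa [circlePt, circleTangent] using Real.hasDerivAt_sin θ

lemma hasDerivAt_circleTangent (θ : ℝ) : HasDerivAt circleTangent (-circlePt θ) θ := by
  refine hasDerivAt_of_coord fun i => ?_
  fin_cases i
  · simpa [circlePt, circleTangent] using (Real.hasDerivAt_sin θ).fun_neg
  · simpa [circlePt, circleTangent] using Real.hasDerivAt_cos θ

lemma one_sub_div_pos {T t : ℝ} (hT : 0 < T) (ht : t < T) : 0 < 1 - t / T :=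
  sub_pos.2 ((div_lt_one hT).2 ht)

lemma radius_pos {r₀ T t : ℝ} (hr : 0 < r₀) (hT : 0 < T) (ht : t < T) : 0 < radius r₀ T t :=
  mul_pos hr (Real.rpow_pos_of_pos (one_sub_div_pos hT ht) _)

lemma hasDerivAt_one_sub_div_rpow {T t : ℝ} (hT : 0 < T) (ht : t < T) (a : ℝ) :
    HasDerivAt (fun s : ℝ => (1 - s / T) ^ a) (-(1 / T) * a * (1 - t / T) ^ (a - 1)) t :=
  (((hasDerivAt_id t).div_const T).const_sub 1).rpow_const
    (Or.inl (one_sub_div_pos hT ht).ne')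

lemma hasDerivAt_radius (r₀ : ℝ) {T t : ℝ} (hT : 0 < T) (ht : t < T) :
    HasDerivAt (radius r₀ T) (radiusVel r₀ T t) t := by
  have h := (hasDerivAt_one_sub_div_rpow hT ht (2 / 3)).const_mul r₀
  refine h.congr_deriv ?_
  rw [radiusVel, show (2 / 3 : ℝ) - 1 = -1 / 3 by norm_num]
  ring

lemma radius_mul_radiusVel (r₀ : ℝ) {T t : ℝ} (hT : 0 < T) (ht : t < T) :
    radius r₀ T t * radiusVel r₀ T t
      = -(2 / 3) * (r₀ ^ 2 / T) * (1 - t / T) ^ ((1 : ℝ) / 3) := by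
  have h := Real.rpow_add (one_sub_div_pos hT ht) (2 / 3) (-1 / 3)
  rw [show (2 / 3 : ℝ) + -1 / 3 = 1 / 3 by norm_num] at h
  rw [h, radius, radiusVel]
  ring

/-- The geodesic equation for concentric circles, as an equation for the radius:
`(r r')' = r'² / 2`. -/
lemma hasDerivAt_radius_mul_radiusVel (r₀ : ℝ) {T t : ℝ} (hT : 0 < T) (ht : t < T) :
    HasDerivAt (fun s => radius r₀ T s * radiusVel r₀ T s)
      (radiusVel r₀ T t ^ 2 / 2) t := by
  have h := (hasDerivAt_one_sub_div_rpow hT ht (1 / 3)).const_mul (-(2 / 3) * (r₀ ^ 2 / T))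
  have he : (fun s => radius r₀ T s * radiusVel r₀ T s) =ᶠ[nhds t]
      fun s => -(2 / 3) * (r₀ ^ 2 / T) * (1 - s / T) ^ ((1 : ℝ) / 3) := by
    filter_upwards [Iio_mem_nhds ht] with s hs using radius_mul_radiusVel r₀ hT hs
  refine (h.congr_of_eventuallyEq he).congr_deriv ?_
  have hp := Real.rpow_add (one_sub_div_pos hT ht) (-1 / 3) (-1 / 3)
  rw [show (-1 / 3 : ℝ) + -1 / 3 = 1 / 3 - 1 by norm_num] at hp
  rw [hp, radiusVel]
  ring

lemma deriv_shrinkingCircle_angle (r₀ T t θ : ℝ) :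
    deriv (fun θ' => shrinkingCircle r₀ T t θ') θ = radius r₀ T t • circleTangent θ :=
  ((hasDerivAt_circlePt θ).const_smul (radius r₀ T t)).deriv

lemma deriv_shrinkingCircle_time (r₀ : ℝ) {T t : ℝ} (hT : 0 < T) (ht : t < T) (θ : ℝ) :
    deriv (fun s => shrinkingCircle r₀ T s θ) t = radiusVel r₀ T t • circlePt θ :=
  ((hasDerivAt_radius r₀ hT ht).smul_const (circlePt θ)).deriv

lemma norm_deriv_shrinkingCircle_angle {r₀ T t : ℝ} (hr : 0 < r₀) (hT : 0 < T) (ht : t < T)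
    (θ : ℝ) : ‖deriv (fun θ' => shrinkingCircle r₀ T t θ') θ‖ = radius r₀ T t := by
  rw [deriv_shrinkingCircle_angle, norm_smul, norm_circleTangent, mul_one,
    Real.norm_of_nonneg (radius_pos hr hT ht).le]

lemma continuous_radius (r₀ T : ℝ) : Continuous (radius r₀ T) :=
  continuous_const.mul ((continuous_const.sub (continuous_id.div_const T)).rpow_const
    fun _ => Or.inr (by norm_num))

/-- The explicit family of concentric circles `c(t,θ) = r₀ (1−t/T)^{2/3}(cos θ, sin θ)` is a
solution of the geodesic equation of the `L²`-metric, `(|c_θ| c_t)_t = −½ ((|c_t|²/|c_θ|) c_θ)_θ`,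
on `[0,T) × ℝ`, consisting of regular closed curves, which shrinks to the point `0` uniformly
as `t → T⁻`: a circle shrinks to a point along an `L²`-geodesic in finite time. -/
theorem shrinkingCircle_is_L2_geodesic (r₀ T : ℝ) (hr : 0 < r₀) (hT : 0 < T) :
    -- `c` is smooth on `[0,T) × ℝ`
    ContDiffOn ℝ ∞ (fun p : ℝ × ℝ => shrinkingCircle r₀ T p.1 p.2)
      (Set.Ico 0 T ×ˢ Set.univ) ∧
    -- each curve `c(t,·)` is `2π`-periodic and regular
    (∀ t ∈ Set.Ico (0:ℝ) T, ∀ θ : ℝ,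
      shrinkingCircle r₀ T t (θ + 2 * π) = shrinkingCircle r₀ T t θ ∧
      deriv (fun θ' => shrinkingCircle r₀ T t θ') θ ≠ 0) ∧
    -- the geodesic equation of the `L²`-metric holds at every `(t,θ) ∈ [0,T) × ℝ`
    (∀ t ∈ Set.Ico (0:ℝ) T, ∀ θ : ℝ,
      deriv (fun s =>
          ‖deriv (fun θ' => shrinkingCircle r₀ T s θ') θ‖ •
            deriv (fun s' => shrinkingCircle r₀ T s' θ) s) t
        = -(1 / 2 : ℝ) •
            deriv (fun θ' =>
              (‖deriv (fun s => shrinkingCircle r₀ T s θ') t‖ ^ 2 /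
                  ‖deriv (fun θ'' => shrinkingCircle r₀ T t θ'') θ'‖) •
                deriv (fun θ'' => shrinkingCircle r₀ T t θ'') θ') θ) ∧
    -- `c(t,θ) → 0` uniformly in `θ` as `t → T⁻`
    (∀ ε > (0:ℝ), ∃ δ > (0:ℝ), ∀ t ∈ Set.Ico (0:ℝ) T, T - δ < t →
      ∀ θ : ℝ, ‖shrinkingCircle r₀ T t θ‖ < ε) := by
  refine ⟨?_, ?_, ?_, ?_⟩
  · refine ContDiffOn.smul (contDiffOn_const.mul (ContDiffOn.rpow_const_of_ne ?_ ?_))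
      (contDiff_circlePt.comp contDiff_snd).contDiffOn
    · exact contDiffOn_const.sub (contDiff_fst.div_const T).contDiffOn
    · exact fun p hp => (one_sub_div_pos hT hp.1.2).ne'
  · intro t ht θ
    refine ⟨by simp [shrinkingCircle, circlePt], norm_ne_zero_iff.1 ?_⟩
    rw [norm_deriv_shrinkingCircle_angle hr hT ht.2]
    exact (radius_pos hr hT ht.2).ne'
  · intro t ht θ
    have hpos := radius_pos hr hT ht.2
    -- The formula for `c_t` holds only for `s < T`, so the left side is identified near `t`.
    have hL : (fun s => ‖deriv (fun θ' => shrinkingCircle r₀ T s θ') θ‖ •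
        deriv (fun s' => shrinkingCircle r₀ T s' θ) s) =ᶠ[nhds t]
        fun s => (radius r₀ T s * radiusVel r₀ T s) • circlePt θ := by
      filter_upwards [Iio_mem_nhds ht.2] with s hs
      rw [norm_deriv_shrinkingCircle_angle hr hT hs, deriv_shrinkingCircle_time r₀ hT hs,
        smul_smul]
    have hR : (fun θ' => (‖deriv (fun s => shrinkingCircle r₀ T s θ') t‖ ^ 2 /
          ‖deriv (fun θ'' => shrinkingCircle r₀ T t θ'') θ'‖) •
          deriv (fun θ'' => shrinkingCircle r₀ T t θ'') θ') =
        fun θ' => radiusVel r₀ T t ^ 2 • circleTangent θ' := by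
      funext θ'
      rw [norm_deriv_shrinkingCircle_angle hr hT ht.2, deriv_shrinkingCircle_time r₀ hT ht.2,
        deriv_shrinkingCircle_angle, norm_smul, norm_circlePt, mul_one, Real.norm_eq_abs, sq_abs,
        smul_smul, div_mul_cancel₀ _ hpos.ne']
    rw [hL.deriv_eq, hR,
      ((hasDerivAt_radius_mul_radiusVel r₀ hT ht.2).smul_const (circlePt θ)).deriv,
      deriv_fun_const_smul _ (hasDerivAt_circleTangent θ).differentiableAt,
      (hasDerivAt_circleTangent θ).deriv]
    module
  · intro ε hε
    have hzero : radius r₀ T T = 0 := by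
      rw [radius, div_self hT.ne', sub_self, Real.zero_rpow (by norm_num), mul_zero]
    obtain ⟨δ, hδ, h⟩ := Metric.continuousAt_iff.1 (continuous_radius r₀ T).continuousAt ε hε
    refine ⟨δ, hδ, fun t ht htδ θ => ?_⟩
    have hdist : dist t T < δ := by
      rw [Real.dist_eq, abs_lt]
      constructor <;> linarith [ht.2]
    have hd := h hdist
    rw [hzero, dist_zero_right] at hd
    rwa [shrinkingCircle_eq, norm_smul, norm_circlePt, mul_one]
end
end

section
/- Let d ≥ 1 and let q : ℝ → ℝ^d be smooth, 2π-periodic, with q(θ) ≠ 0 for all θ. Then there exists a smooth, 2π-periodic, regular curve c : ℝ → ℝ^d with R(c) = q if and only if ∫₀^{2π} q(θ)|q(θ)| dθ = 0. That is, the image of the space of smooth closed regular curves under the SRVT is exactly the set of smooth 2π-periodic nowhere-vanishing q with ∫₀^{2π} |q| q dθ = 0. -/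
/-!
The map `v ↦ v / √‖v‖` is a bijection of nonzero vectors with inverse `w ↦ ‖w‖ • w`, which is smooth
away from `0`. Hence `R(c) = q` with `c` regular means exactly `c' = ‖q‖ • q`. Such a `c` is the
primitive of a smooth `2π`-periodic function, and it is itself `2π`-periodic if and only if that
function has vanishing integral over one period.
-/

open Real MeasureTheory Set
open scoped ContDiff RealInnerProductSpace

noncomputable section

/-- The square root velocity transform `R(c) = c' / √|c'|`. -/
def SRVT {d : ℕ} (c : ℝ → Rd d) : ℝ → Rd d :=
  fun θ => (Real.sqrt ‖deriv c θ‖)⁻¹ • deriv c θ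

/-- Scaling a nonzero vector `v` by `1 / √‖v‖` gives a vector of norm `√‖v‖`, so `v` is recovered
as `‖w‖ • w`. -/
lemma norm_smul_of_eq_inv_sqrt_smul {d : ℕ} {v w : Rd d} (hv : v ≠ 0)
    (h : (Real.sqrt ‖v‖)⁻¹ • v = w) : ‖w‖ • w = v := by
  have hs : 0 < Real.sqrt ‖v‖ := Real.sqrt_pos.2 (norm_pos_iff.2 hv)
  have hn : ‖w‖ = Real.sqrt ‖v‖ := by
    rw [← h, norm_smul, norm_inv, Real.norm_of_nonneg hs.le]
    nth_rewrite 2 [← Real.mul_self_sqrt (norm_nonneg v)]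
    field_simp
  rw [hn, ← h, smul_smul, mul_inv_cancel₀ hs.ne', one_smul]

/-- The map `w ↦ ‖w‖ • w` is inverted by `v ↦ v / √‖v‖` away from `0`. -/
lemma inv_sqrt_smul_norm_smul {d : ℕ} {w : Rd d} (hw : w ≠ 0) :
    (Real.sqrt ‖‖w‖ • w‖)⁻¹ • (‖w‖ • w) = w := by
  rw [norm_smul, norm_norm, Real.sqrt_mul_self (norm_nonneg w), smul_smul,
    inv_mul_cancel₀ (norm_ne_zero_iff.2 hw), one_smul]

/-- Characterization of the image of the space of smooth regular closed curves under the SRVT: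
a smooth, `2π`-periodic, nowhere-vanishing `q` is the SRVT of a smooth regular closed curve
if and only if `∫₀^{2π} q|q| dθ = 0`. -/
theorem SRVT_image_closed_curves
    (d : ℕ) (hd : 1 ≤ d) (q : ℝ → Rd d)
    (hq : ContDiff ℝ ∞ q) (hqper : ∀ θ, q (θ + 2 * π) = q θ)
    (hq0 : ∀ θ, q θ ≠ 0) :
    (∃ c : ℝ → Rd d, ContDiff ℝ ∞ c ∧ (∀ θ, c (θ + 2 * π) = c θ) ∧
        (∀ θ, deriv c θ ≠ 0) ∧ (∀ θ, SRVT c θ = q θ))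
      ↔ (∫ θ in (0:ℝ)..(2 * π), ‖q θ‖ • q θ) = 0 := by
  have hf : ContDiff ℝ ∞ fun θ => ‖q θ‖ • q θ := (hq.norm ℝ hq0).smul hq
  have hfc : Continuous fun θ => ‖q θ‖ • q θ := hf.continuous
  constructor
  · rintro ⟨c, hc, hcper, hc0, hR⟩
    have hder : deriv c = fun θ => ‖q θ‖ • q θ := by
      funext θ
      exact (norm_smul_of_eq_inv_sqrt_smul (hc0 θ) (hR θ)).symm
    rw [← hder]
    rw [intervalIntegral.integral_deriv_eq_sub
      (fun x _ => hc.differentiable (by simp) x)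
      ((hder ▸ hfc : Continuous (deriv c)).intervalIntegrable _ _)]
    have := hcper 0
    rw [zero_add] at this
    rw [this, sub_self]
  · intro hint
    have hd : ∀ θ, HasDerivAt (fun x => ∫ t in (0:ℝ)..x, ‖q t‖ • q t) (‖q θ‖ • q θ) θ :=
      fun θ => hfc.integral_hasStrictDerivAt 0 θ |>.hasDerivAt
    have hder : deriv (fun x => ∫ t in (0:ℝ)..x, ‖q t‖ • q t) = fun θ => ‖q θ‖ • q θ :=
      funext fun θ => (hd θ).deriv
    have hper : Function.Periodic (fun θ => ‖q θ‖ • q θ) (2 * π) := fun θ => by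
      simp only [hqper]
    refine ⟨fun x => ∫ t in (0:ℝ)..x, ‖q t‖ • q t, ?_, fun θ => ?_, fun θ => ?_, fun θ => ?_⟩
    · rw [contDiff_infty_iff_deriv, hder]
      exact ⟨fun θ => (hd θ).differentiableAt, hf⟩
    · have h := hper.intervalIntegral_add_eq θ 0
      rw [zero_add, hint] at h
      have hadd := intervalIntegral.integral_add_adjacent_intervals
        (hfc.intervalIntegrable (μ := volume) 0 θ)
        (hfc.intervalIntegrable (μ := volume) θ (θ + 2 * π))
      rw [h, add_zero] at hadd
      exact hadd.symm
    · rw [hder]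
      exact smul_ne_zero (norm_ne_zero_iff.2 (hq0 θ)) (hq0 θ)
    · simp only [SRVT, hder]
      exact inv_sqrt_smul_norm_smul (hq0 θ)
end
end

section
/- Let d ≥ 1, let c : ℝ → ℝ^d be a smooth regular curve with unit tangent v = c'/|c'|, let h : ℝ → ℝ^d be smooth, and fix θ ∈ ℝ. Then the map ε ↦ R(c + εh)(θ) = (c'(θ) + εh'(θ))/√|c'(θ) + εh'(θ)| is defined for all ε in a neighborhood of 0 and is differentiable at ε = 0, with derivative |c'(θ)|^{−1/2} ( h'(θ) − (1/2)⟨h'(θ), v(θ)⟩ v(θ) ). -/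
/-! At fixed `θ`, the derivative of the perturbed curve is the affine function
`ε ↦ c'(θ) + ε h'(θ)`, which is nonzero at `ε = 0`, hence near it. The claim is then the derivative
at `0` of `x / √|x|` along a line through a nonzero vector, a product and chain rule computation
carried out in `hasDerivAt_normalized_line`. -/

open Real MeasureTheory Set
open scoped ContDiff RealInnerProductSpace

noncomputable section

/-- Differentiating `ε ↦ |a + εb|^{-1/2} (a + εb)` at `ε = 0`. -/
theorem hasDerivAt_normalized_line {d : ℕ} (a b : Rd d) (ha : a ≠ 0) :
    HasDerivAt (fun ε : ℝ => (Real.sqrt ‖a + ε • b‖)⁻¹ • (a + ε • b))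
      ((Real.sqrt ‖a‖)⁻¹ • (b - ((1 / 2 : ℝ) * ⟪b, ‖a‖⁻¹ • a⟫) • (‖a‖⁻¹ • a))) 0 := by
  have hn : 0 < ‖a‖ := norm_pos_iff.mpr ha
  have hline : HasDerivAt (fun ε : ℝ => a + ε • b) b 0 := by
    simpa using ((hasDerivAt_id (0 : ℝ)).smul_const b).const_add a
  -- The norm is differentiated as the square root of the squared norm, which is smooth.
  have hnorm : HasDerivAt (fun ε : ℝ => ‖a + ε • b‖) (⟪a, b⟫ / ‖a‖) 0 := by
    have h1 := hline.norm_sq.sqrt (by simpa using ha)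
    simp only [Real.sqrt_sq (norm_nonneg _), zero_smul, add_zero] at h1
    convert h1 using 1
    field_simp
  have hs : 0 < Real.sqrt ‖a‖ := Real.sqrt_pos.mpr hn
  have h2 := ((hnorm.sqrt (by simpa using ha)).fun_inv (by simpa using hs.ne')).fun_smul hline
  simp only [zero_smul, add_zero, Real.sq_sqrt hn.le] at h2
  refine h2.congr_deriv (Eq.symm ?_)
  rw [real_inner_smul_right, real_inner_comm, smul_sub, smul_smul, smul_smul, sub_eq_add_neg,
    ← neg_smul]
  congr 2
  field_simp

/-- The map `ε ↦ R(c + εh)(θ)` is defined (the perturbed curve has nonvanishing derivative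
at `θ`) for all `ε` near `0`, and is differentiable at `ε = 0` with derivative
`|c'(θ)|^{−1/2} (h'(θ) − ½⟨h'(θ), v(θ)⟩ v(θ))`, where `v = c'/|c'|`. -/
theorem SRVT_derivative_of_perturbation
    (d : ℕ) (hd : 1 ≤ d) (c h : ℝ → Rd d)
    (hc : ContDiff ℝ ∞ c) (hcreg : ∀ θ', deriv c θ' ≠ 0)
    (hh : ContDiff ℝ ∞ h) (θ : ℝ) :
    (∃ ε₀ > (0:ℝ), ∀ ε : ℝ, |ε| < ε₀ → deriv (fun x => c x + ε • h x) θ ≠ 0) ∧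
    HasDerivAt (fun ε : ℝ => SRVT (fun x => c x + ε • h x) θ)
      ((Real.sqrt ‖deriv c θ‖)⁻¹ •
        (deriv h θ -
          ((1 / 2 : ℝ) * ⟪deriv h θ, ‖deriv c θ‖⁻¹ • deriv c θ⟫) •
            (‖deriv c θ‖⁻¹ • deriv c θ)))
      0 := by
  have hderiv : ∀ ε : ℝ, deriv (fun x => c x + ε • h x) θ = deriv c θ + ε • deriv h θ := by
    intro ε
    have h1 := (hc.differentiable (by simp) θ).hasDerivAt
    have h2 := (hh.differentiable (by simp) θ).hasDerivAt
    exact (h1.fun_add (h2.fun_const_smul ε)).deriv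
  constructor
  · have hcont : ContinuousAt (fun ε : ℝ => deriv c θ + ε • deriv h θ) 0 := by fun_prop
    have hev := hcont.eventually_ne (y := 0) (by simpa using hcreg θ)
    obtain ⟨ε₀, hε₀, H⟩ := Metric.eventually_nhds_iff.mp hev
    refine ⟨ε₀, hε₀, fun ε hε => ?_⟩
    rw [hderiv]
    exact H (by simpa using hε)
  · simp only [SRVT, hderiv]
    exact hasDerivAt_normalized_line _ _ (hcreg θ)
end
end

section
/- Let d ≥ 1, let c : [0,2π] → ℝ^d be a regular open curve with unit tangent v = c'/|c'|, and let h : [0,2π] → ℝ^d be smooth. Denote by DR_c(h)(θ) the derivative at ε = 0 of ε ↦ R(c+εh)(θ). Then ∫₀^{2π} |DR_c(h)(θ)|² dθ = ∫₀^{2π} ( |(D_s h)^⊥(θ)|² + (1/4)⟨D_s h(θ), v(θ)⟩² ) |c'(θ)| dθ = G_c(h,h); i.e., the SRVT is an infinitesimal isometry from the SRV elastic metric G to the flat L²-inner product. -/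
/-!
The identity holds pointwise under the integral sign. Write `u = c'(θ)`, `w = h'(θ)`,
`v = u/|u|` and `a = D_s h = w/|u|`. The map `ε ↦ (u + ε w)/√|u + ε w|` has derivative
`√|u| (a - ½⟨a, v⟩ v) = √|u| (a^⊥ + ½⟨a, v⟩ v)` at `ε = 0`, because the derivative of `|u + ε w|`
is `⟨u, w⟩/|u|`. The two summands `a^⊥` and `v` are orthogonal and `|v| = 1`, so the squared norm is
`(|a^⊥|² + ¼⟨a, v⟩²)|u|`.
-/


open Real MeasureTheory Set
open scoped ContDiff RealInnerProductSpace

noncomputable section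

/-- The unit tangent vector `v = c'/|c'|` of the curve `c`. -/
def unitTangent {d : ℕ} (c : ℝ → Rd d) : ℝ → Rd d :=
  fun θ => ‖deriv c θ‖⁻¹ • deriv c θ

/-- The component of `a` orthogonal to the unit vector `v`: `a^⊥ = a − ⟨a,v⟩v`. -/
def perp {d : ℕ} (a v : Rd d) : Rd d := a - ⟪a, v⟫ • v

/-- The SRV elastic metric
`G_c(h,k) = ∫₀^{2π} (⟨(D_s h)^⊥, (D_s k)^⊥⟩ + ¼⟨D_s h, v⟩⟨D_s k, v⟩) |c'| dθ`. -/
def srvMetric {d : ℕ} (c h k : ℝ → Rd d) : ℝ :=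
  ∫ θ in (0:ℝ)..(2 * π),
    (⟪perp (arcDeriv c h θ) (unitTangent c θ), perp (arcDeriv c k θ) (unitTangent c θ)⟫ +
      (1 / 4 : ℝ) * ⟪arcDeriv c h θ, unitTangent c θ⟫ * ⟪arcDeriv c k θ, unitTangent c θ⟫) *
    ‖deriv c θ‖

theorem hasDerivAt_norm_add_smul {d : ℕ} {u : Rd d} (hu : u ≠ 0) (w : Rd d) :
    HasDerivAt (fun ε : ℝ => ‖u + ε • w‖) (‖u‖⁻¹ * ⟪u, w⟫) 0 := by
  have hn : ‖u‖ ≠ 0 := norm_ne_zero_iff.mpr hu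
  have h1 : HasDerivAt (fun ε : ℝ => u + ε • w) w 0 := by
    simpa using ((hasDerivAt_id (0 : ℝ)).smul_const w).const_add u
  -- The norm is differentiated as the square root of its square.
  have h2 := h1.norm_sq.sqrt (by simpa using hn)
  simp only [Real.sqrt_sq (norm_nonneg _), zero_smul, add_zero] at h2
  refine h2.congr_deriv ?_
  field_simp

/-- The derivative at `u` of `x ↦ x/√|x|` in direction `w`. -/
theorem hasDerivAt_inv_sqrt_norm_smul {d : ℕ} {u : Rd d} (hu : u ≠ 0) (w : Rd d) :
    HasDerivAt (fun ε : ℝ => (Real.sqrt ‖u + ε • w‖)⁻¹ • (u + ε • w))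
      (Real.sqrt ‖u‖ • (‖u‖⁻¹ • w - ((1 / 2 : ℝ) * ⟪u, w⟫ * ‖u‖⁻¹ ^ 3) • u)) 0 := by
  have hn : 0 < ‖u‖ := norm_pos_iff.mpr hu
  have h1 : HasDerivAt (fun ε : ℝ => u + ε • w) w 0 := by
    simpa using ((hasDerivAt_id (0 : ℝ)).smul_const w).const_add u
  have h2 := (hasDerivAt_norm_add_smul hu w).sqrt (by simpa using hn.ne')
  have h3 := (h2.fun_inv (by simpa using (Real.sqrt_pos.mpr hn).ne')).fun_smul h1
  refine h3.congr_deriv ?_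
  simp only [zero_smul, add_zero]
  have hs : 0 < Real.sqrt ‖u‖ := Real.sqrt_pos.mpr hn
  have hq : ‖u‖ = Real.sqrt ‖u‖ ^ 2 := (Real.sq_sqrt hn.le).symm
  generalize Real.sqrt ‖u‖ = s at hs hq
  rw [hq, smul_sub, smul_smul, smul_smul, sub_eq_add_neg, ← neg_smul]
  congr 2 <;> field_simp

/-- The orthogonal decomposition: both sides equal `|w|²/|u| - ¾⟨u, w⟩²/|u|³`. -/
theorem norm_sq_eq_perp {d : ℕ} {u : Rd d} (hu : u ≠ 0) (w : Rd d) :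
    ‖Real.sqrt ‖u‖ • (‖u‖⁻¹ • w - ((1 / 2 : ℝ) * ⟪u, w⟫ * ‖u‖⁻¹ ^ 3) • u)‖ ^ 2 =
      (‖perp (‖u‖⁻¹ • w) (‖u‖⁻¹ • u)‖ ^ 2 +
        (1 / 4 : ℝ) * ⟪‖u‖⁻¹ • w, ‖u‖⁻¹ • u⟫ ^ 2) * ‖u‖ := by
  have hn : ‖u‖ ≠ 0 := norm_ne_zero_iff.mpr hu
  rw [norm_smul, mul_pow, Real.norm_eq_abs, sq_abs, Real.sq_sqrt (norm_nonneg u), perp,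
    norm_sub_sq_real, norm_sub_sq_real]
  simp only [norm_smul, inner_smul_left, inner_smul_right, Real.norm_eq_abs, mul_pow, sq_abs,
    real_inner_comm u w, conj_trivial]
  field_simp
  ring

theorem deriv_add_smul {d : ℕ} {c h : ℝ → Rd d} (hc : ContDiff ℝ ∞ c) (hh : ContDiff ℝ ∞ h)
    (ε θ : ℝ) : deriv (fun x => c x + ε • h x) θ = deriv c θ + ε • deriv h θ := by
  have hc' := (hc.differentiable (by simp) θ).hasDerivAt
  have hh' := (hh.differentiable (by simp) θ).hasDerivAt
  exact (hc'.add (hh'.const_smul ε)).deriv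

/-- The SRVT is an infinitesimal isometry from the SRV elastic metric to the flat
`L²`-inner product: if `DR_c(h)(θ)` is the derivative at `ε = 0` of `ε ↦ R(c + εh)(θ)`, then
`∫₀^{2π} |DR_c(h)|² dθ = ∫₀^{2π} (|(D_s h)^⊥|² + ¼⟨D_s h, v⟩²)|c'| dθ = G_c(h,h)`. -/
theorem SRVT_infinitesimal_isometry
    (d : ℕ) (hd : 1 ≤ d) (c h : ℝ → Rd d)
    (hc : ContDiff ℝ ∞ c) (hcreg : ∀ θ, deriv c θ ≠ 0)
    (hh : ContDiff ℝ ∞ h)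
    (DR : ℝ → Rd d)
    (hDR : ∀ θ, HasDerivAt (fun ε : ℝ => SRVT (fun x => c x + ε • h x) θ) (DR θ) 0) :
    (∫ θ in (0:ℝ)..(2 * π), ‖DR θ‖ ^ 2)
      = ∫ θ in (0:ℝ)..(2 * π),
          (‖perp (arcDeriv c h θ) (unitTangent c θ)‖ ^ 2 +
            (1 / 4 : ℝ) * ⟪arcDeriv c h θ, unitTangent c θ⟫ ^ 2) * ‖deriv c θ‖ ∧
    (∫ θ in (0:ℝ)..(2 * π), ‖DR θ‖ ^ 2) = srvMetric c h h := by
  have key : ∀ θ, ‖DR θ‖ ^ 2 = (‖perp (arcDeriv c h θ) (unitTangent c θ)‖ ^ 2 +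
      (1 / 4 : ℝ) * ⟪arcDeriv c h θ, unitTangent c θ⟫ ^ 2) * ‖deriv c θ‖ := by
    intro θ
    have h1 := hDR θ
    simp only [SRVT, deriv_add_smul hc hh] at h1
    rw [h1.unique (hasDerivAt_inv_sqrt_norm_smul (hcreg θ) (deriv h θ))]
    exact norm_sq_eq_perp (hcreg θ) (deriv h θ)
  simp only [key, srvMetric, real_inner_self_eq_norm_sq, true_and]
  simp only [sq, mul_assoc]
end
end

section
/- Let d ≥ 1 and let γ : [0,1] × [0,2π] → ℝ^d be smooth with ∂_θ γ(t,θ) ≠ 0 for all (t,θ), so γ is a smooth path of regular open curves from c₀ = γ(0,·) to c₁ = γ(1,·). Then for the SRV metric G, ∫₀¹ √( G_{γ(t,·)}(∂_t γ(t,·), ∂_t γ(t,·)) ) dt ≥ ( ∫₀^{2π} |R(c₀)(θ) − R(c₁)(θ)|² dθ )^{1/2}. In particular, if c₁ − c₀ is not a constant function, then every smooth path of regular curves from c₀ to c₁ has G-length at least this strictly positive number, so the geodesic distance of G on open curves modulo translations is point-separating. -/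
/-!
The square root velocity transform is an isometry from the SRV metric to the flat `L²` metric.
For a path `γ` put `A = ∂_θ γ` and `B = ∂_t ∂_θ γ = ∂_θ ∂_t γ`; then `q = A / √|A|` satisfies
`∂_t q = |A|^{-1/2} (B - ⟨A,B⟩ A / (2|A|²))`, whose squared norm is exactly the integrand of
`G_γ(∂_t γ, ∂_t γ)` (`hasDerivAt_srv`, `norm_sq_srvDeriv`). The length of `γ` is therefore the
`L²`-length of `t ↦ q(t, ·)`, which is at least the `L²`-distance of its endpoints by Minkowski's
integral inequality (`minkowski_interval`), obtained from Fubini and Cauchy–Schwarz.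

For positivity: if the `L²`-distance vanishes, then by continuity `R(c₀) = R(c₁)` pointwise, and
since `c' = |R(c)| R(c)` the curves have the same derivative, hence differ by a constant.
-/

open Real MeasureTheory Set
open scoped ContDiff RealInnerProductSpace

noncomputable section

section IntervalInequalities

variable {E : Type*} [NormedAddCommGroup E] [InnerProductSpace ℝ E]

/-- Cauchy–Schwarz in `L²(a,b)`, from the discriminant of `x ↦ ∫ ‖x • u + v‖² ≥ 0`. -/
lemma cauchy_schwarz_interval {a b : ℝ} (hab : a ≤ b) {u v : ℝ → E}
    (hu : Continuous u) (hv : Continuous v) :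
    ∫ θ in a..b, ⟪u θ, v θ⟫ ≤
      √(∫ θ in a..b, ‖u θ‖ ^ 2) * √(∫ θ in a..b, ‖v θ‖ ^ 2) := by
  have hU : 0 ≤ ∫ θ in a..b, ‖u θ‖ ^ 2 :=
    intervalIntegral.integral_nonneg hab fun _ _ => by positivity
  have hquad : ∀ x : ℝ, 0 ≤ (∫ θ in a..b, ‖u θ‖ ^ 2) * (x * x)
      + (2 * ∫ θ in a..b, ⟪u θ, v θ⟫) * x + ∫ θ in a..b, ‖v θ‖ ^ 2 := by
    intro x
    have hx : 0 ≤ ∫ θ in a..b, ‖x • u θ + v θ‖ ^ 2 :=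
      intervalIntegral.integral_nonneg hab fun _ _ => by positivity
    have heq : (fun θ => ‖x • u θ + v θ‖ ^ 2) =
        fun θ => ((x * x) * ‖u θ‖ ^ 2 + (2 * x) * ⟪u θ, v θ⟫) + ‖v θ‖ ^ 2 := by
      funext θ
      rw [norm_add_sq_real, norm_smul, real_inner_smul_left, mul_pow, Real.norm_eq_abs, sq_abs]
      ring
    rw [heq, intervalIntegral.integral_add, intervalIntegral.integral_add,
      intervalIntegral.integral_const_mul, intervalIntegral.integral_const_mul] at hx
    · linarith
    all_goals exact Continuous.intervalIntegrable (by fun_prop) _ _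
  have hd := discrim_le_zero hquad
  rw [discrim] at hd
  rw [← Real.sqrt_mul hU]
  apply Real.le_sqrt_of_sq_le
  linarith

/-- Minkowski's integral inequality: the `L²(0,b)`-norm of `∫₀¹ F t dt` is at most the integral
over `t` of the `L²`-norms. -/
lemma minkowski_interval [CompleteSpace E] {b : ℝ} (hb : 0 ≤ b) {F : ℝ → ℝ → E}
    (hF : Continuous (Function.uncurry F)) :
    √(∫ θ in (0:ℝ)..b, ‖∫ t in (0:ℝ)..1, F t θ‖ ^ 2) ≤
      ∫ t in (0:ℝ)..1, √(∫ θ in (0:ℝ)..b, ‖F t θ‖ ^ 2) := by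
  set w : ℝ → E := fun θ => ∫ t in (0:ℝ)..1, F t θ with hw
  have hFs : Continuous (Function.uncurry fun θ t => F t θ) := hF.comp continuous_swap
  have hwc : Continuous w :=
    intervalIntegral.continuous_parametric_intervalIntegral_of_continuous' hFs 0 1
  have hFt : ∀ t, Continuous (F t) := fun t => hF.comp (by fun_prop : Continuous fun θ => (t, θ))
  have hFθ : ∀ θ, Continuous fun t => F t θ :=
    fun θ => hF.comp (by fun_prop : Continuous fun t => (t, θ))
  have hN : Continuous fun t => √(∫ θ in (0:ℝ)..b, ‖F t θ‖ ^ 2) := by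
    refine (intervalIntegral.continuous_parametric_intervalIntegral_of_continuous'
      (f := fun t θ => ‖F t θ‖ ^ 2) ?_ 0 b).sqrt
    exact hF.norm.pow 2
  have hI : Continuous (Function.uncurry fun θ t => ⟪w θ, F t θ⟫) :=
    (hwc.comp continuous_fst).inner hFs
  have hIs : Continuous (Function.uncurry fun t θ => ⟪w θ, F t θ⟫) := hI.comp continuous_swap
  have hwn : 0 ≤ ∫ θ in (0:ℝ)..b, ‖w θ‖ ^ 2 :=
    intervalIntegral.integral_nonneg hb fun _ _ => by positivity
  have h1 : ∫ θ in (0:ℝ)..b, ‖w θ‖ ^ 2 = ∫ θ in (0:ℝ)..b, ∫ t in (0:ℝ)..1, ⟪w θ, F t θ⟫ := by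
    congr 1
    funext θ
    rw [← real_inner_self_eq_norm_sq]
    have := (innerSL ℝ (w θ)).intervalIntegral_comp_comm
      ((hFθ θ).intervalIntegrable (μ := volume) 0 1)
    simp only [innerSL_apply_apply] at this
    exact this.symm
  have h2 : ∫ θ in (0:ℝ)..b, ∫ t in (0:ℝ)..1, ⟪w θ, F t θ⟫ =
      ∫ t in (0:ℝ)..1, ∫ θ in (0:ℝ)..b, ⟪w θ, F t θ⟫ := by
    refine intervalIntegral_intervalIntegral_swap (F := fun θ t => ⟪w θ, F t θ⟫) ?_
    exact (hI.continuousOn.integrableOn_compact (isCompact_uIcc.prod isCompact_uIcc)).mono_set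
      (prod_mono uIoc_subset_uIcc uIoc_subset_uIcc)
  have h3 : ∫ t in (0:ℝ)..1, ∫ θ in (0:ℝ)..b, ⟪w θ, F t θ⟫ ≤
      ∫ t in (0:ℝ)..1, √(∫ θ in (0:ℝ)..b, ‖w θ‖ ^ 2) * √(∫ θ in (0:ℝ)..b, ‖F t θ‖ ^ 2) := by
    apply intervalIntegral.integral_mono_on zero_le_one
    · exact (intervalIntegral.continuous_parametric_intervalIntegral_of_continuous'
        hIs 0 b).intervalIntegrable _ _
    · exact (continuous_const.mul hN).intervalIntegrable _ _
    · exact fun t _ => cauchy_schwarz_interval hb hwc (hFt t)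
  rw [intervalIntegral.integral_const_mul] at h3
  have hR : 0 ≤ ∫ t in (0:ℝ)..1, √(∫ θ in (0:ℝ)..b, ‖F t θ‖ ^ 2) :=
    intervalIntegral.integral_nonneg zero_le_one fun _ _ => Real.sqrt_nonneg _
  have hS := Real.sqrt_nonneg (∫ θ in (0:ℝ)..b, ‖w θ‖ ^ 2)
  have hSS := Real.mul_self_sqrt hwn
  rcases hS.eq_or_lt with h0 | hpos
  · rw [← h0]; exact hR
  · exact le_of_mul_le_mul_left (by linarith) hpos

end IntervalInequalities

section Pointwise

variable {d : ℕ}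

/-- The differential of `a ↦ a / √|a|` at `a` in the direction `b`. -/
def srvDeriv (a b : Rd d) : Rd d :=
  (√‖a‖)⁻¹ • (b - (⟪a, b⟫ / (2 * ‖a‖ ^ 2)) • a)

lemma hasDerivAt_srv {A : ℝ → Rd d} {B : Rd d} {t : ℝ} (hA : HasDerivAt A B t) (h0 : A t ≠ 0) :
    HasDerivAt (fun s => (√‖A s‖)⁻¹ • A s) (srvDeriv (A t) B) t := by
  have hn : 0 < ‖A t‖ := norm_pos_iff.2 h0
  have hs : 0 < √‖A t‖ := Real.sqrt_pos.2 hn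
  have hss : √‖A t‖ ^ 2 = ‖A t‖ := Real.sq_sqrt hn.le
  have hnorm : HasDerivAt (fun s => ‖A s‖) (⟪A t, B⟫ / ‖A t‖) t := by
    have h := hA.norm_sq.sqrt (by positivity)
    simp only [Real.sqrt_sq (norm_nonneg _)] at h
    convert h using 1
    field_simp
  have h := ((hnorm.sqrt hn.ne').inv hs.ne').smul hA
  refine HasDerivAt.congr_deriv h ?_
  rw [srvDeriv, smul_sub, smul_smul, sub_eq_add_neg, ← neg_smul]
  congr 2
  rw [hss]
  field_simp

lemma continuous_srvDeriv {X : Type*} [TopologicalSpace X] {A B : X → Rd d}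
    (hA : Continuous A) (hB : Continuous B) (h0 : ∀ x, A x ≠ 0) :
    Continuous fun x => srvDeriv (A x) (B x) := by
  have hn : ∀ x, 0 < ‖A x‖ := fun x => norm_pos_iff.2 (h0 x)
  have hc : Continuous fun x => ⟪A x, B x⟫ / (2 * ‖A x‖ ^ 2) :=
    (hA.inner hB).div (by fun_prop) fun x => by have := hn x; positivity
  exact (hA.norm.sqrt.inv₀ fun x => (Real.sqrt_pos.2 (hn x)).ne').smul (hB.sub (hc.smul hA))

/-- Infinitesimal isometry: the integrand of the SRV metric is the squared norm of the
differential of the SRVT. -/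
lemma norm_sq_srvDeriv {a : Rd d} (b : Rd d) (ha : a ≠ 0) :
    (⟪perp (‖a‖⁻¹ • b) (‖a‖⁻¹ • a), perp (‖a‖⁻¹ • b) (‖a‖⁻¹ • a)⟫ +
      (1 / 4 : ℝ) * ⟪‖a‖⁻¹ • b, ‖a‖⁻¹ • a⟫ * ⟪‖a‖⁻¹ • b, ‖a‖⁻¹ • a⟫) * ‖a‖
      = ‖srvDeriv a b‖ ^ 2 := by
  have hn : 0 < ‖a‖ := norm_pos_iff.2 ha
  have hss : √‖a‖ ^ 2 = ‖a‖ := Real.sq_sqrt hn.le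
  rw [srvDeriv, norm_smul, mul_pow, norm_inv, inv_pow, Real.norm_eq_abs, sq_abs, hss,
    ← real_inner_self_eq_norm_sq (b - _)]
  simp only [perp, inner_sub_left, inner_sub_right, real_inner_smul_left, real_inner_smul_right]
  rw [real_inner_comm b a, real_inner_self_eq_norm_sq, real_inner_self_eq_norm_sq]
  field_simp
  ring

/-- The SRVT determines the derivative of the curve: `a = |q| q` for `q = a / √|a|`, also at
`a = 0`. -/
lemma norm_smul_srv (a : Rd d) : ‖(√‖a‖)⁻¹ • a‖ • ((√‖a‖)⁻¹ • a) = a := by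
  rcases eq_or_ne a 0 with rfl | ha
  · simp
  have hn : 0 < ‖a‖ := norm_pos_iff.2 ha
  have hs : 0 < √‖a‖ := Real.sqrt_pos.2 hn
  have hss : √‖a‖ ^ 2 = ‖a‖ := Real.sq_sqrt hn.le
  rw [norm_smul, smul_smul, norm_inv, Real.norm_eq_abs, abs_of_pos hs]
  have : (√‖a‖)⁻¹ * ‖a‖ * (√‖a‖)⁻¹ = 1 := by
    field_simp
    exact hss.symm
  rw [this, one_smul]

end Pointwise

section Partials

variable {d : ℕ} {γ : ℝ → ℝ → Rd d}

lemma two_le_infty : (2 : WithTop ℕ∞) ≤ ∞ :=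
  WithTop.coe_le_coe.2 (le_top : (2 : ℕ∞) ≤ ⊤)

lemma hasDerivAt_snd (hγ : ContDiff ℝ ∞ (Function.uncurry γ)) (t θ : ℝ) :
    HasDerivAt (γ t) (fderiv ℝ (Function.uncurry γ) (t, θ) (0, 1)) θ := by
  have h := (hγ.differentiable (by simp) (t, θ)).hasFDerivAt
  exact h.comp_hasDerivAt θ ((hasDerivAt_const θ t).prodMk (hasDerivAt_id θ))

lemma hasDerivAt_fst (hγ : ContDiff ℝ ∞ (Function.uncurry γ)) (t θ : ℝ) :
    HasDerivAt (fun s => γ s θ) (fderiv ℝ (Function.uncurry γ) (t, θ) (1, 0)) t := by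
  have h := (hγ.differentiable (by simp) (t, θ)).hasFDerivAt
  exact h.comp_hasDerivAt t ((hasDerivAt_id t).prodMk (hasDerivAt_const t θ))

lemma hasDerivAt_fst_snd (hγ : ContDiff ℝ ∞ (Function.uncurry γ)) (t θ : ℝ) :
    HasDerivAt (fun s => deriv (γ s) θ)
      (fderiv ℝ (fderiv ℝ (Function.uncurry γ)) (t, θ) (1, 0) (0, 1)) t := by
  simp only [fun s => (hasDerivAt_snd hγ s θ).deriv]
  have hd : Differentiable ℝ (fderiv ℝ (Function.uncurry γ)) :=
    (hγ.fderiv_right (m := 1) (one_add_one_eq_two.trans_le two_le_infty)).differentiable (by simp)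
  have h := (hd (t, θ)).hasFDerivAt.comp_hasDerivAt t
    ((hasDerivAt_id t).prodMk (hasDerivAt_const t θ))
  have hcl := h.clm_apply (hasDerivAt_const t ((0 : ℝ), (1 : ℝ)))
  simpa using hcl

/-- The mixed partials commute, so `∂_θ ∂_t γ` has the same expression as `∂_t ∂_θ γ`. -/
lemma deriv_snd_fst (hγ : ContDiff ℝ ∞ (Function.uncurry γ)) (t θ : ℝ) :
    deriv (fun η => deriv (fun s => γ s η) t) θ =
      fderiv ℝ (fderiv ℝ (Function.uncurry γ)) (t, θ) (1, 0) (0, 1) := by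
  simp only [fun η => (hasDerivAt_fst hγ t η).deriv]
  have hd : Differentiable ℝ (fderiv ℝ (Function.uncurry γ)) :=
    (hγ.fderiv_right (m := 1) (one_add_one_eq_two.trans_le two_le_infty)).differentiable (by simp)
  have h := (hd (t, θ)).hasFDerivAt.comp_hasDerivAt θ
    ((hasDerivAt_const θ t).prodMk (hasDerivAt_id θ))
  have hcl := h.clm_apply (hasDerivAt_const θ ((1 : ℝ), (0 : ℝ)))
  have hsymm : IsSymmSndFDerivAt ℝ (Function.uncurry γ) (t, θ) :=
    hγ.contDiffAt.isSymmSndFDerivAt (by simpa using two_le_infty)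
  rw [hsymm.eq (1, 0) (0, 1)]
  simpa using hcl.deriv

lemma continuous_deriv_snd (hγ : ContDiff ℝ ∞ (Function.uncurry γ)) :
    Continuous fun p : ℝ × ℝ => deriv (γ p.1) p.2 := by
  simp only [fun s θ => (hasDerivAt_snd hγ s θ).deriv]
  exact (hγ.continuous_fderiv (by simp)).clm_apply continuous_const

lemma continuous_mixed (hγ : ContDiff ℝ ∞ (Function.uncurry γ)) :
    Continuous fun p : ℝ × ℝ =>
      fderiv ℝ (fderiv ℝ (Function.uncurry γ)) p (1, 0) (0, 1) := by
  have h1 : ContDiff ℝ 1 (fderiv ℝ (Function.uncurry γ)) :=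
    hγ.fderiv_right (m := 1) (one_add_one_eq_two.trans_le two_le_infty)
  exact ((h1.continuous_fderiv (by simp)).clm_apply continuous_const).clm_apply continuous_const

end Partials

/-- Any smooth path of regular open curves from `c₀` to `c₁` has SRV-metric length at least
`‖R(c₀) − R(c₁)‖_{L²}`; if moreover `c₁ − c₀` is not constant, this lower bound is strictly
positive, so the geodesic distance of the SRV metric on open curves modulo translations is
point-separating. -/
theorem srvMetric_path_length_lower_bound
    (d : ℕ) (hd : 1 ≤ d) (γ : ℝ → ℝ → Rd d)
    (hγ : ContDiff ℝ ∞ (Function.uncurry γ))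
    (hreg : ∀ t ∈ Set.Icc (0:ℝ) 1, ∀ θ ∈ Set.Icc (0:ℝ) (2 * π), deriv (γ t) θ ≠ 0)
    (c₀ c₁ : ℝ → Rd d) (h0 : γ 0 = c₀) (h1 : γ 1 = c₁) :
    Real.sqrt (∫ θ in (0:ℝ)..(2 * π), ‖SRVT c₀ θ - SRVT c₁ θ‖ ^ 2)
      ≤ ∫ t in (0:ℝ)..1,
          Real.sqrt (srvMetric (γ t) (fun θ => deriv (fun s => γ s θ) t)
            (fun θ => deriv (fun s => γ s θ) t)) ∧
    ((¬ ∃ v : Rd d, ∀ θ ∈ Set.Icc (0:ℝ) (2 * π), c₁ θ - c₀ θ = v) →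
      0 < Real.sqrt (∫ θ in (0:ℝ)..(2 * π), ‖SRVT c₀ θ - SRVT c₁ θ‖ ^ 2)) := by
  subst h0 h1
  have hpi : (0:ℝ) < 2 * π := by positivity
  have hA := continuous_deriv_snd hγ
  constructor
  · set D : ℝ → ℝ → Rd d := fun t θ => srvDeriv (deriv (γ t) θ)
      (fderiv ℝ (fderiv ℝ (Function.uncurry γ)) (t, θ) (1, 0) (0, 1)) with hD
    -- `∂_t q` is continuous only where the curves are regular, so it is precomposed with the
    -- retraction of the plane onto the rectangle `[0,1] × [0,2π]`.
    set F : ℝ → ℝ → Rd d := fun t θ =>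
      D (projIcc 0 1 zero_le_one t) (projIcc 0 (2 * π) hpi.le θ) with hF
    have hFD : ∀ t ∈ Icc (0:ℝ) 1, ∀ θ ∈ Icc (0:ℝ) (2 * π), F t θ = D t θ := by
      intro t ht θ hθ
      simp only [hF, projIcc_of_mem _ ht, projIcc_of_mem _ hθ]
    have hFc : Continuous (Function.uncurry F) := by
      have hP : Continuous fun p : ℝ × ℝ => (((projIcc 0 1 zero_le_one p.1 : Icc (0:ℝ) 1) : ℝ),
          ((projIcc 0 (2 * π) hpi.le p.2 : Icc (0:ℝ) (2 * π)) : ℝ)) :=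
        (continuous_subtype_val.comp (continuous_projIcc.comp continuous_fst)).prodMk
          (continuous_subtype_val.comp (continuous_projIcc.comp continuous_snd))
      exact continuous_srvDeriv (hA.comp hP) ((continuous_mixed hγ).comp hP) fun p =>
        hreg _ (projIcc 0 1 zero_le_one p.1).2 _ (projIcc 0 (2 * π) hpi.le p.2).2
    have key := minkowski_interval hpi.le hFc
    refine (congrArg Real.sqrt ?_).trans_le (key.trans_eq ?_)
    · apply intervalIntegral.integral_congr
      intro θ hθ
      rw [uIcc_of_le hpi.le] at hθ
      have hint : ∫ t in (0:ℝ)..1, F t θ = SRVT (γ 1) θ - SRVT (γ 0) θ := by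
        refine intervalIntegral.integral_eq_sub_of_hasDerivAt (f := fun t => SRVT (γ t) θ) ?_ ?_
        · intro t ht
          rw [uIcc_of_le zero_le_one] at ht
          rw [hFD t ht θ hθ]
          exact hasDerivAt_srv (hasDerivAt_fst_snd hγ t θ) (hreg t ht θ hθ)
        · exact (hFc.comp (by fun_prop : Continuous fun t : ℝ => (t, θ))).intervalIntegrable _ _
      simp only [hint]
      rw [norm_sub_rev]
    · apply intervalIntegral.integral_congr
      intro t ht
      rw [uIcc_of_le zero_le_one] at ht
      simp only [srvMetric]
      congr 1
      symm
      apply intervalIntegral.integral_congr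
      intro θ hθ
      rw [uIcc_of_le hpi.le] at hθ
      simp only [arcDeriv, unitTangent]
      rw [deriv_snd_fst hγ t θ, hFD t ht θ hθ]
      exact norm_sq_srvDeriv _ (hreg t ht θ hθ)
  · intro hne
    apply Real.sqrt_pos.2
    have hcont : ∀ t ∈ Icc (0:ℝ) 1, ContinuousOn (SRVT (γ t)) (Icc 0 (2 * π)) := by
      intro t ht
      have hAt : Continuous (deriv (γ t)) := hA.comp (by fun_prop : Continuous fun θ : ℝ => (t, θ))
      refine ContinuousOn.smul (ContinuousOn.inv₀ hAt.norm.sqrt.continuousOn ?_) hAt.continuousOn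
      exact fun θ hθ => (Real.sqrt_pos.2 (norm_pos_iff.2 (hreg t ht θ hθ))).ne'
    apply intervalIntegral.integral_pos hpi
    · exact ((hcont 0 (by simp)).sub (hcont 1 (by simp))).norm.pow 2
    · exact fun _ _ => by positivity
    · by_contra! hle
      apply hne
      have hdiff : ∀ t, Differentiable ℝ (γ t) :=
        fun t θ => (hasDerivAt_snd hγ t θ).differentiableAt
      have hderiv : ∀ θ ∈ Icc (0:ℝ) (2 * π), deriv (γ 1) θ = deriv (γ 0) θ := by
        intro θ hθ
        have hz : ‖SRVT (γ 0) θ - SRVT (γ 1) θ‖ ^ 2 = 0 := le_antisymm (hle θ hθ) (by positivity)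
        have heq : SRVT (γ 0) θ = SRVT (γ 1) θ := by
          simpa [sub_eq_zero] using hz
        rw [← norm_smul_srv (deriv (γ 1) θ), ← norm_smul_srv (deriv (γ 0) θ)]
        simp only [SRVT] at heq
        rw [heq]
      refine ⟨γ 1 0 - γ 0 0, ?_⟩
      refine constant_of_has_deriv_right_zero (f := fun θ => γ 1 θ - γ 0 θ)
        ((hdiff 1).continuous.sub (hdiff 0).continuous).continuousOn ?_
      intro θ hθ
      have h := ((hdiff 1 θ).hasDerivAt.sub (hdiff 0 θ).hasDerivAt).hasDerivWithinAt (s := Ici θ)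
      rw [hderiv θ (Ico_subset_Icc_self hθ), sub_self] at h
      exact h
end
end
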